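/- Assume t₁,…,t_m are not all equal, 𝔛 has at least two elements, and e = ‖u‖ ∉ {0,1}. Then the intersection of Q_sat with the line {v + λ·u : λ ∈ ℝ} consists exactly of the two points c + e⁻¹·√(ρ/(e² − 1))·u and c − e⁻¹·√(ρ/(e² − 1))·u. -/

import Mathlib

open scoped RealInnerProductSpace

lemma aux_span {n m : ℕ} [NeZero m] (s : Fin m → EuclideanSpace ℝ (Fin n))
    (u v w : EuclideanSpace ℝ (Fin n)) (K : ℝ)
    (hu : u ∈ Submodule.span ℝ (Set.range fun i => s i - s 0))
    (hv : v ∈ affineSpan ℝ (Set.range s)) (h : ∀ i, ⟪s i, w⟫ = K) :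
    ⟪u, w⟫ = 0 ∧ ⟪v, w⟫ = K := by
  constructor
  · induction hu using Submodule.span_induction with
    | mem x hx =>
      obtain ⟨i, rfl⟩ := hx
      simp only [inner_sub_left, h, sub_self]
    | zero => simp
    | add x y _ _ hx hy => rw [inner_add_left, hx, hy, add_zero]
    | smul a x _ hx => rw [real_inner_smul_left, hx, mul_zero]
  · refine affineSpan_induction (p := fun v => ⟪v, w⟫ = K) hv ?_ ?_
    · rintro x ⟨i, rfl⟩
      exact h i
    · intro a x y z hx hy hz
      simp only [vsub_eq_sub, vadd_eq_add, inner_add_left, real_inner_smul_left, inner_sub_left,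
        hx, hy, hz]
      ring

set_option maxHeartbeats 2000000 in
theorem stmt_9 {n m : ℕ} [NeZero m] (hn : 1 ≤ n) (hm : m ≤ n + 1)
    (s : Fin m → EuclideanSpace ℝ (Fin n)) (t : Fin m → ℝ)
    (hindep : AffineIndependent ℝ s)
    (u v : EuclideanSpace ℝ (Fin n)) (α β : ℝ)
    (hu : u ∈ Submodule.span ℝ (Set.range fun i => s i - s 0))
    (hα : ∀ i, ⟪u, s i⟫ - α = t i)
    (hv : v ∈ affineSpan ℝ (Set.range s))
    (hβ : ∀ i, 2 * ⟪s i, v⟫ - β = ‖s i‖ ^ 2 - t i ^ 2)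
    (X : Set (ℝ × EuclideanSpace ℝ (Fin n)))
    (hX : X = {p : ℝ × EuclideanSpace ℝ (Fin n) | ∀ i, ‖s i - p.2‖ ^ 2 = (t i - p.1) ^ 2})
    (S : Set (ℝ × EuclideanSpace ℝ (Fin n)))
    (hS : S = {q : ℝ × EuclideanSpace ℝ (Fin n) | ∀ p ∈ X, ‖q.2 - p.2‖ ^ 2 = (q.1 - p.1) ^ 2})
    (Qsat : Set (EuclideanSpace ℝ (Fin n)))
    (hQsat : Qsat = {x : EuclideanSpace ℝ (Fin n) | ∃ τ : ℝ, (τ, x) ∈ S})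
    (htne : ∃ i j : Fin m, t i ≠ t j)
    (hX2 : X.Nontrivial)
    (e μ ρ : ℝ) (he : e = ‖u‖) (he0 : e ≠ 0) (he1 : e ≠ 1)
    (hμ : μ = (⟪u, v⟫ - α) / (e ^ 2 - 1))
    (hρ : ρ = (⟪u, v⟫ - α) ^ 2 / (e ^ 2 - 1) - ‖v‖ ^ 2 + β)
    (c : EuclideanSpace ℝ (Fin n)) (hc : c = v - μ • u) :
    Qsat ∩ {x : EuclideanSpace ℝ (Fin n) | ∃ lam : ℝ, x = v + lam • u}
      = {c + (e⁻¹ * Real.sqrt (ρ / (e ^ 2 - 1))) • u,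
          c - (e⁻¹ * Real.sqrt (ρ / (e ^ 2 - 1))) • u} := by
  have hep : 0 < e := lt_of_le_of_ne (he ▸ norm_nonneg u) (Ne.symm he0)
  have hD : e ^ 2 - 1 ≠ 0 := by
    intro h
    apply he1
    nlinarith
  have hμD : μ * (e ^ 2 - 1) = ⟪u, v⟫ - α := by rw [hμ]; field_simp
  have hρ' : ρ = μ ^ 2 * (e ^ 2 - 1) - ‖v‖ ^ 2 + β := by
    rw [hρ, hμ]; field_simp
  have huu : ⟪u, u⟫ = e ^ 2 := by rw [real_inner_self_eq_norm_sq, he]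
  -- structure of X
  have hA : ∀ b x, (b, x) ∈ X → ⟪u, x - v - b • u⟫ = 0 ∧
      ‖x - v - b • u‖ ^ 2 = ρ - (e ^ 2 - 1) * (b + μ) ^ 2 := by
    intro b x hp
    rw [hX] at hp
    have hp' : ∀ i, ‖s i - x‖ ^ 2 = (t i - b) ^ 2 := hp
    have hK : ∀ i, ⟪s i, x - v - b • u⟫ = -(β + 2 * b * α + b ^ 2 - ‖x‖ ^ 2) / 2 := by
      intro i
      have h1 := hp' i
      have h2 := hβ i
      have h3 := hα i
      rw [norm_sub_sq_real] at h1
      rw [inner_sub_right, inner_sub_right, real_inner_smul_right, real_inner_comm]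
      rw [real_inner_comm] at h1
      rw [real_inner_comm (s i) u] at *
      rw [← h3] at h1 h2
      linarith
    obtain ⟨h1, h2⟩ := aux_span s u v _ _ hu hv hK
    refine ⟨h1, ?_⟩
    have hx : x = v + b • u + (x - v - b • u) := by abel
    generalize x - v - b • u = w at *
    have hxn : ‖x‖ ^ 2 = ‖v‖ ^ 2 + b ^ 2 * e ^ 2 + ‖w‖ ^ 2 + 2 * b * ⟪u, v⟫ + 2 * ⟪v, w⟫ := by
      rw [hx, ← real_inner_self_eq_norm_sq, ← real_inner_self_eq_norm_sq v,
        ← real_inner_self_eq_norm_sq w]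
      simp only [inner_add_left, inner_add_right, real_inner_smul_left, real_inner_smul_right, huu,
        h1, real_inner_comm u v, real_inner_comm v w, real_inner_comm u w]
      ring
    rw [hρ']
    linear_combination -hxn - 2 * h2 + 2 * b * hμD
  have hB : ∀ b, (e ^ 2 - 1) * (b + μ) ^ 2 = ρ → (b, v + b • u) ∈ X := by
    intro b hb
    rw [hX]
    intro i
    have h2 := hβ i
    have h3 := hα i
    show ‖s i - (v + b • u)‖ ^ 2 = (t i - b) ^ 2
    rw [← real_inner_self_eq_norm_sq]
    rw [← real_inner_self_eq_norm_sq] at h2 hρ'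
    simp only [inner_add_left, inner_add_right, inner_sub_left, inner_sub_right,
      real_inner_smul_left, real_inner_smul_right, huu]
    rw [real_inner_comm u v, real_inner_comm (s i) v, real_inner_comm u (s i)]
    linear_combination -h2 - 2 * b * h3 - 2 * b * hμD + hb + hρ'
  have hr0 : 0 ≤ ρ / (e ^ 2 - 1) := by
    rcases lt_or_gt_of_ne hD with hneg | hpos
    · apply div_nonneg_of_nonpos _ hneg.le
      have h2 := hβ 0
      have h3 := hα 0
      have hy : s 0 = v + (s 0 - v) := by abel
      generalize s 0 - v = y at hy
      have hcs : ⟪u, y⟫ ^ 2 ≤ e ^ 2 * ‖y‖ ^ 2 := by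
        rw [he, ← mul_pow]
        exact sq_le_sq' (by linarith [neg_le_of_abs_le (abs_real_inner_le_norm u y)])
          (real_inner_le_norm u y)
      rw [← h3, hy, norm_add_sq_real, inner_add_left, inner_add_right,
        real_inner_self_eq_norm_sq, real_inner_comm v y] at h2
      have hk : ⟪u, v⟫ = μ * (e ^ 2 - 1) + α := by linarith
      rw [hk] at h2
      have h4 : ρ = μ ^ 2 * (e ^ 2 - 1) - ‖y‖ ^ 2 + (⟪u, y⟫ + μ * (e ^ 2 - 1)) ^ 2 := by
        linear_combination hρ' - h2
      have h5 : e ^ 2 * ρ ≤ (e ^ 2 - 1) * (⟪u, y⟫ + e ^ 2 * μ) ^ 2 := by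
        rw [h4]; linarith
      have h6 := mul_nonneg (neg_nonneg.2 hneg.le) (sq_nonneg (⟪u, y⟫ + e ^ 2 * μ))
      by_contra! h7
      have h8 : 0 < e ^ 2 * ρ := by positivity
      linarith
    · obtain ⟨⟨b, x⟩, hp, -⟩ := hX2
      have := (hA b x hp).2
      apply div_nonneg _ hpos.le
      nlinarith [sq_nonneg ‖x - v - b • u‖, mul_nonneg hpos.le (sq_nonneg (b + μ))]
  obtain ⟨r, hr⟩ : ∃ r, r = Real.sqrt (ρ / (e ^ 2 - 1)) := ⟨_, rfl⟩
  have hrsq : (e ^ 2 - 1) * r ^ 2 = ρ := by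
    rw [hr, Real.sq_sqrt hr0]; field_simp
  rw [← hr]
  have hp1 := hB (-μ + r) (by rw [← hrsq]; ring)
  have hp2 := hB (-μ - r) (by rw [← hrsq]; ring)
  have htwo : ∃ b₁ x₁ b₂ x₂, (b₁, x₁) ∈ X ∧ (b₂, x₂) ∈ X ∧ b₁ ≠ b₂ := by
    by_cases hr1 : r = 0
    · obtain ⟨⟨b, x⟩, hp, hne⟩ := hX2.exists_ne (-μ + r, v + (-μ + r) • u)
      refine ⟨b, x, _, _, hp, hp1, ?_⟩
      intro hb
      apply hne
      have h := (hA b x hp).2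
      rw [← hrsq, hb, hr1] at h
      have h' : x - v - (-μ + 0) • u = 0 := by
        rw [← norm_eq_zero]
        apply pow_eq_zero_iff (two_ne_zero) |>.1
        rw [h]; ring
      rw [hb, hr1]
      congr 1
      rw [sub_sub, sub_eq_zero] at h'
      exact h'
    · exact ⟨_, _, _, _, hp1, hp2, fun h => hr1 (by linarith)⟩
  -- membership equation
  have hM : ∀ l b x, (b, x) ∈ X → ‖v + l • u - x‖ ^ 2 =
      (l - b) ^ 2 * e ^ 2 + (ρ - (e ^ 2 - 1) * (b + μ) ^ 2) := by
    intro l b x hp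
    obtain ⟨h1, h2⟩ := hA b x hp
    have : v + l • u - x = (l - b) • u - (x - v - b • u) := by
      rw [sub_smul]; abel
    rw [this, norm_sub_sq_real, real_inner_smul_left, h1, h2, norm_smul, mul_pow, ← he,
      Real.norm_eq_abs, sq_abs]
    ring
  have hQ : ∀ l, v + l • u ∈ Qsat ↔ (e * (l + μ)) ^ 2 = r ^ 2 := by
    intro l
    rw [hQsat, hS]
    constructor
    · rintro ⟨τ, h⟩
      simp only [Set.mem_setOf_eq] at h
      obtain ⟨b₁, x₁, b₂, x₂, m1, m2, hne⟩ := htwo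
      have e1 : ‖v + l • u - x₁‖ ^ 2 = (τ - b₁) ^ 2 := h (b₁, x₁) m1
      have e2 : ‖v + l • u - x₂‖ ^ 2 = (τ - b₂) ^ 2 := h (b₂, x₂) m2
      rw [hM l _ _ m1] at e1
      rw [hM l _ _ m2] at e2
      have ht : τ = l * e ^ 2 + (e ^ 2 - 1) * μ := by
        have : (b₁ - b₂) * (τ - (l * e ^ 2 + (e ^ 2 - 1) * μ)) = 0 := by
          linear_combination (e1 - e2) / 2
        rcases mul_eq_zero.1 this with h | h
        · exact absurd (sub_eq_zero.1 h) hne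
        · linarith
      rw [ht, ← hrsq] at e1
      apply mul_left_cancel₀ hD
      linear_combination -e1
    · intro h
      refine ⟨l * e ^ 2 + (e ^ 2 - 1) * μ, ?_⟩
      rintro ⟨b, x⟩ hp
      show ‖v + l • u - x‖ ^ 2 = (l * e ^ 2 + (e ^ 2 - 1) * μ - b) ^ 2
      rw [hM l b x hp, ← hrsq]
      linear_combination -(e ^ 2 - 1) * h
  have hc1 : c + (e⁻¹ * r) • u = v + (-μ + e⁻¹ * r) • u := by
    rw [hc, add_smul, neg_smul]; abel
  have hc2 : c - (e⁻¹ * r) • u = v + (-μ - e⁻¹ * r) • u := by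
    rw [hc, sub_smul, neg_smul]; abel
  rw [hc1, hc2]
  ext x
  simp only [Set.mem_inter_iff, Set.mem_setOf_eq, Set.mem_insert_iff, Set.mem_singleton_iff]
  constructor
  · rintro ⟨hx, l, rfl⟩
    rcases sq_eq_sq_iff_eq_or_eq_neg.1 ((hQ l).1 hx) with h | h
    · left
      have : l = -μ + e⁻¹ * r := by rw [← h]; field_simp; ring
      rw [this]
    · right
      have : l = -μ - e⁻¹ * r := by
        have : r = -(e * (l + μ)) := by linarith
        rw [this]; field_simp; ring
      rw [this]
  · rintro (rfl | rfl)
    · exact ⟨(hQ _).2 (by field_simp; ring), _, rfl⟩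
    · exact ⟨(hQ _).2 (by field_simp; ring), _, rfl⟩
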